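/- Fix T > 0, p > 0 and constants α, β, γ, δ ≥ 0. There exists a constant C, depending only on p, T, α, β, γ, δ (and not on ε), such that for every ε > 0 and every u ∈ C^∞([0,T]×[0,1]) with 0 ≤ u ≤ 1 satisfying ∂_t u = ε ∂_x² u − p ∂_x[J(u)] on (0,T)×(0,1) and the Robin boundary conditions [ε∂_x u − pJ(u) + α − (α+γ)u]|_{x=0} = 0 and [ε∂_x u − pJ(u) − δ + (β+δ)u]|_{x=1} = 0 for all t ∈ [0,T], one has ε ∫₀ᵀ ∫₀¹ (∂_x u(t,x))² dx dt ≤ C. (The uniform H¹-type estimate (eq. v1) in the proof of Theorem 2.8.) -/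

import Mathlib

open Set MeasureTheory

/-- The flux `J u = u (1 - u)`. -/
noncomputable def J (u : ℝ) : ℝ := u * (1 - u)

/-!
Write the equation in conservation form `∂ₜu + ∂ₓF = 0` with the viscous flux `F = f(u) - ε ∂ₓu`,
and let `Φ` be a primitive of `f`. Testing with `u` gives the energy balance
`∂ₜ(-u² / 2) + ∂ₓ(Φ(u) - u F) = ε (∂ₓu)²`, so the divergence theorem turns the dissipation
`ε ∫∫ (∂ₓu)²` into boundary terms. The energy flux `Φ(u) - u F` contains `∂ₓu` only through `F`,
which the Robin conditions prescribe as a function of `u` on the lateral sides: there `ε` drops out,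
and every boundary term is bounded by the range of `u` alone.
-/

/-- The partial derivative `∂ₜu` in the first variable of the plane. -/
noncomputable def timeDeriv (u : ℝ × ℝ → ℝ) (z : ℝ × ℝ) : ℝ := deriv (fun s => u (s, z.2)) z.1

/-- The partial derivative `∂ₓu` in the second variable of the plane. -/
noncomputable def spaceDeriv (u : ℝ × ℝ → ℝ) (z : ℝ × ℝ) : ℝ := deriv (fun y => u (z.1, y)) z.2

/-- The total flux `f(u) - ε ∂ₓu` of the viscous conservation law `∂ₜu + ∂ₓ(f(u)) = ε ∂ₓ²u`, which
then reads `∂ₜu + ∂ₓ(viscousFlux ε f u) = 0`. -/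
noncomputable def viscousFlux (ε : ℝ) (f : ℝ → ℝ) (u : ℝ × ℝ → ℝ) (z : ℝ × ℝ) : ℝ :=
  f (u z) - ε * spaceDeriv u z

/-- The flux of the energy `-u² / 2` along the viscous conservation law. It is written through the
viscous flux and a primitive of `f`, so that prescribing the viscous flux on the boundary prescribes
the energy flux there as well. -/
noncomputable def energyFlux (ε : ℝ) (f : ℝ → ℝ) (u : ℝ × ℝ → ℝ) (z : ℝ × ℝ) : ℝ :=
  (∫ w in (0 : ℝ)..u z, f w) - u z * viscousFlux ε f u z

lemma abs_intervalIntegral_le_of_abs_le {g : ℝ → ℝ} {a b C : ℝ} (hab : a ≤ b)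
    (hg : ∀ x ∈ Icc a b, |g x| ≤ C) : |∫ x in a..b, g x| ≤ C * (b - a) := by
  simpa only [Real.norm_eq_abs, abs_of_nonneg (sub_nonneg.2 hab)] using
    intervalIntegral.norm_integral_le_of_norm_le_const (f := g) (a := a) (b := b) fun x hx =>
      hg x (Ioc_subset_Icc_self (uIoc_of_le hab ▸ hx))

section PartialDerivatives

variable {u : ℝ × ℝ → ℝ}

lemma timeDeriv_eq_fderiv {z : ℝ × ℝ} (hu : DifferentiableAt ℝ u z) :
    timeDeriv u z = fderiv ℝ u z (1, 0) :=
  (hu.hasFDerivAt.comp_hasDerivAt z.1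
    ((hasDerivAt_id z.1).prodMk (hasDerivAt_const z.1 z.2))).deriv

lemma spaceDeriv_eq_fderiv {z : ℝ × ℝ} (hu : DifferentiableAt ℝ u z) :
    spaceDeriv u z = fderiv ℝ u z (0, 1) :=
  (hu.hasFDerivAt.comp_hasDerivAt z.2
    ((hasDerivAt_const z.2 z.1).prodMk (hasDerivAt_id z.2))).deriv

lemma hasDerivAt_timeDeriv {z : ℝ × ℝ} (hu : DifferentiableAt ℝ u z) :
    HasDerivAt (fun s => u (s, z.2)) (timeDeriv u z) z.1 :=
  DifferentiableAt.hasDerivAt (by fun_prop)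

lemma hasDerivAt_spaceDeriv {z : ℝ × ℝ} (hu : DifferentiableAt ℝ u z) :
    HasDerivAt (fun y => u (z.1, y)) (spaceDeriv u z) z.2 :=
  DifferentiableAt.hasDerivAt (by fun_prop)

lemma contDiff_spaceDeriv (hu : ContDiff ℝ 2 u) : ContDiff ℝ 1 (spaceDeriv u) := by
  have hdu : Differentiable ℝ u := hu.differentiable two_ne_zero
  have heq : spaceDeriv u = fun z => fderiv ℝ u z (0, 1) :=
    funext fun z => spaceDeriv_eq_fderiv (hdu z)
  rw [heq]
  exact (hu.fderiv_right (m := 1) (by norm_num)).clm_apply contDiff_const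

theorem integral_timeDeriv_add_spaceDeriv {P Q : ℝ × ℝ → ℝ} {t₀ t₁ a b : ℝ}
    (ht : t₀ ≤ t₁) (hab : a ≤ b) (hP : Differentiable ℝ P) (hQ : Differentiable ℝ Q)
    (hint : IntegrableOn (fun z => timeDeriv P z + spaceDeriv Q z) (Icc t₀ t₁ ×ˢ Icc a b)) :
    ∫ z in Icc t₀ t₁ ×ˢ Icc a b, (timeDeriv P z + spaceDeriv Q z) =
      (((∫ t in t₀..t₁, Q (t, b)) - ∫ t in t₀..t₁, Q (t, a)) + ∫ x in a..b, P (t₁, x)) -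
        ∫ x in a..b, P (t₀, x) := by
  simp only [timeDeriv_eq_fderiv (hP _), spaceDeriv_eq_fderiv (hQ _), Icc_prod_Icc] at hint ⊢
  exact integral_divergence_prod_Icc_of_hasFDerivAt_of_le P Q _ _ (t₀, a) (t₁, b) ⟨ht, hab⟩
    hP.continuous.continuousOn hQ.continuous.continuousOn (fun z _ => (hP z).hasFDerivAt)
    (fun z _ => (hQ z).hasFDerivAt) hint

end PartialDerivatives

section Energy

variable {ε : ℝ} {f : ℝ → ℝ} {u : ℝ × ℝ → ℝ}

lemma differentiable_viscousFlux (hf : Differentiable ℝ f) (hu : ContDiff ℝ 2 u) :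
    Differentiable ℝ (viscousFlux ε f u) :=
  (hf.comp (hu.differentiable two_ne_zero)).sub
    (((contDiff_spaceDeriv hu).differentiable one_ne_zero).const_mul ε)

lemma differentiable_energyFlux (hf : Differentiable ℝ f) (hu : ContDiff ℝ 2 u) :
    Differentiable ℝ (energyFlux ε f u) := by
  have hprim : Differentiable ℝ fun w => ∫ r in (0 : ℝ)..w, f r :=
    fun w => (hf.continuous.integral_hasStrictDerivAt 0 w).hasDerivAt.differentiableAt
  have hdu : Differentiable ℝ u := hu.differentiable two_ne_zero
  exact (hprim.comp hdu).sub (hdu.mul (differentiable_viscousFlux hf hu))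

lemma spaceDeriv_viscousFlux (hf : Differentiable ℝ f) (hu : ContDiff ℝ 2 u) (z : ℝ × ℝ) :
    spaceDeriv (viscousFlux ε f u) z =
      spaceDeriv (fun w => f (u w)) z - ε * spaceDeriv (spaceDeriv u) z := by
  have hdu : Differentiable ℝ u := hu.differentiable two_ne_zero
  have hdv := (contDiff_spaceDeriv hu).differentiable one_ne_zero
  exact ((hasDerivAt_spaceDeriv (hf.comp hdu z)).sub
    ((hasDerivAt_spaceDeriv (hdv z)).const_mul ε)).deriv

lemma timeDeriv_energy {z : ℝ × ℝ} (hu : DifferentiableAt ℝ u z) :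
    timeDeriv (fun w => -(u w ^ 2 / 2)) z = -(u z * timeDeriv u z) := by
  refine (((hasDerivAt_timeDeriv hu).pow 2).div_const 2).neg.deriv.trans ?_
  push_cast
  ring

lemma spaceDeriv_energyFlux (hf : Differentiable ℝ f) (hu : ContDiff ℝ 2 u) (z : ℝ × ℝ) :
    spaceDeriv (energyFlux ε f u) z =
      ε * spaceDeriv u z ^ 2 - u z * spaceDeriv (viscousFlux ε f u) z := by
  have hu' := hasDerivAt_spaceDeriv (hu.differentiable two_ne_zero z)
  have hF := hasDerivAt_spaceDeriv (differentiable_viscousFlux (ε := ε) hf hu z)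
  have hprim := (hf.continuous.integral_hasStrictDerivAt 0 (u z)).hasDerivAt
  refine ((hprim.comp z.2 hu').sub (hu'.mul hF)).deriv.trans ?_
  simp only [viscousFlux]
  ring

variable {t₀ t₁ a b : ℝ}

theorem integral_dissipation_eq (ht : t₀ ≤ t₁) (hab : a ≤ b)
    (hf : Differentiable ℝ f) (hu : ContDiff ℝ 2 u)
    (hcons : ∀ z ∈ Ioo t₀ t₁ ×ˢ Ioo a b, timeDeriv u z + spaceDeriv (viscousFlux ε f u) z = 0) :
    ε * ∫ z in Icc t₀ t₁ ×ˢ Icc a b, spaceDeriv u z ^ 2 =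
      (((∫ t in t₀..t₁, energyFlux ε f u (t, b)) - ∫ t in t₀..t₁, energyFlux ε f u (t, a)) +
        ∫ x in a..b, -(u (t₁, x) ^ 2 / 2)) - ∫ x in a..b, -(u (t₀, x) ^ 2 / 2) := by
  have hdu : Differentiable ℝ u := hu.differentiable two_ne_zero
  have hbalance : EqOn (fun z => ε * spaceDeriv u z ^ 2)
      (fun z => timeDeriv (fun w => -(u w ^ 2 / 2)) z + spaceDeriv (energyFlux ε f u) z)
      (Ioo t₀ t₁ ×ˢ Ioo a b) := fun z hz => by
    simp only [timeDeriv_energy (hdu z), spaceDeriv_energyFlux hf hu]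
    linear_combination u z * hcons z hz
  have hopen : MeasurableSet (Ioo t₀ t₁ ×ˢ Ioo a b) := measurableSet_Ioo.prod measurableSet_Ioo
  have hae : (Ioo t₀ t₁ ×ˢ Ioo a b : Set (ℝ × ℝ)) =ᵐ[volume] Icc t₀ t₁ ×ˢ Icc a b :=
    Measure.set_prod_ae_eq Ioo_ae_eq_Icc Ioo_ae_eq_Icc
  have hcont : Continuous fun z => ε * spaceDeriv u z ^ 2 := by
    have := (contDiff_spaceDeriv hu).continuous
    fun_prop
  have hint : IntegrableOn (fun z => ε * spaceDeriv u z ^ 2) (Icc t₀ t₁ ×ˢ Icc a b) :=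
    hcont.continuousOn.integrableOn_compact (isCompact_Icc.prod isCompact_Icc)
  rw [← integral_timeDeriv_add_spaceDeriv ht hab (by fun_prop) (differentiable_energyFlux hf hu)
      (((hint.congr_set_ae hae).congr_fun hbalance hopen).congr_set_ae hae.symm),
    ← integral_const_mul, ← setIntegral_congr_set hae, setIntegral_congr_fun hopen hbalance,
    setIntegral_congr_set hae]

theorem abs_dissipation_le {R B : ℝ} (ht : t₀ ≤ t₁) (hab : a ≤ b)
    (hf : Differentiable ℝ f) (hu : ContDiff ℝ 2 u)
    (hcons : ∀ z ∈ Ioo t₀ t₁ ×ˢ Ioo a b, timeDeriv u z + spaceDeriv (viscousFlux ε f u) z = 0)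
    (hR : ∀ z ∈ Icc t₀ t₁ ×ˢ Icc a b, |u z| ≤ R)
    (hB : ∀ t ∈ Icc t₀ t₁, ∀ x ∈ ({a, b} : Set ℝ), |energyFlux ε f u (t, x)| ≤ B) :
    |ε * ∫ z in Icc t₀ t₁ ×ˢ Icc a b, spaceDeriv u z ^ 2| ≤
      2 * B * (t₁ - t₀) + R ^ 2 * (b - a) := by
  have hside : ∀ x ∈ ({a, b} : Set ℝ),
      |∫ t in t₀..t₁, energyFlux ε f u (t, x)| ≤ B * (t₁ - t₀) := fun x hx =>
    abs_intervalIntegral_le_of_abs_le ht fun t h => hB t h x hx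
  have htime : ∀ t ∈ Icc t₀ t₁, |∫ x in a..b, -(u (t, x) ^ 2 / 2)| ≤ R ^ 2 / 2 * (b - a) :=
    fun t h => abs_intervalIntegral_le_of_abs_le hab fun x hx => by
      rw [abs_neg, abs_of_nonneg (by positivity)]
      gcongr ?_ / 2
      exact sq_le_sq.2 ((hR (t, x) ⟨h, hx⟩).trans (le_abs_self R))
  rw [integral_dissipation_eq ht hab hf hu hcons]
  have hb := abs_le.1 (hside b (by simp))
  have ha := abs_le.1 (hside a (by simp))
  have hend := abs_le.1 (htime t₁ (right_mem_Icc.2 ht))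
  have hstart := abs_le.1 (htime t₀ (left_mem_Icc.2 ht))
  rw [abs_le]
  constructor <;> linarith

lemma exists_abs_energyFlux_le {K : Set ℝ} {g : ℝ → ℝ} (hK : IsCompact K)
    (hf : Continuous f) (hg : ContinuousOn g K) :
    ∃ B, ∀ (ε : ℝ) (u : ℝ × ℝ → ℝ) (z : ℝ × ℝ), u z ∈ K → viscousFlux ε f u z = g (u z) →
      |energyFlux ε f u z| ≤ B := by
  have hprim : Continuous fun w => ∫ r in (0 : ℝ)..w, f r :=
    intervalIntegral.continuous_primitive (fun _ _ => hf.intervalIntegrable _ _) 0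
  obtain ⟨B, hB⟩ := hK.exists_bound_of_continuousOn
    (hprim.continuousOn.sub (continuousOn_id.mul hg))
  refine ⟨B, fun ε u z hz hflux => ?_⟩
  rw [energyFlux, hflux]
  exact hB (u z) hz

end Energy

theorem stmt6_general {t₀ t₁ a b : ℝ} {f g₀ g₁ : ℝ → ℝ} {K : Set ℝ} (ht : t₀ ≤ t₁) (hab : a ≤ b)
    (hf : Differentiable ℝ f) (hK : IsCompact K) (hg₀ : ContinuousOn g₀ K)
    (hg₁ : ContinuousOn g₁ K) :
    ∃ C : ℝ, ∀ (ε : ℝ) (u : ℝ × ℝ → ℝ),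
      ContDiff ℝ 2 u →
      (∀ z ∈ Icc t₀ t₁ ×ˢ Icc a b, u z ∈ K) →
      (∀ t ∈ Ioo t₀ t₁, ∀ x ∈ Ioo a b,
        deriv (fun s => u (s, x)) t
          = ε * deriv (deriv (fun y => u (t, y))) x - deriv (fun y => f (u (t, y))) x) →
      (∀ t ∈ Icc t₀ t₁, f (u (t, a)) - ε * deriv (fun y => u (t, y)) a = g₀ (u (t, a))) →
      (∀ t ∈ Icc t₀ t₁, f (u (t, b)) - ε * deriv (fun y => u (t, y)) b = g₁ (u (t, b))) →
      |ε * ∫ z in Icc t₀ t₁ ×ˢ Icc a b, (deriv (fun y => u (z.1, y)) z.2) ^ 2| ≤ C := by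
  obtain ⟨R, hR⟩ := hK.exists_bound_of_continuousOn continuousOn_id
  obtain ⟨B₀, hB₀⟩ := exists_abs_energyFlux_le hK hf.continuous hg₀
  obtain ⟨B₁, hB₁⟩ := exists_abs_energyFlux_le hK hf.continuous hg₁
  refine ⟨2 * max B₀ B₁ * (t₁ - t₀) + R ^ 2 * (b - a), fun ε u hu hrange hpde hleft hright => ?_⟩
  have hcons : ∀ z ∈ Ioo t₀ t₁ ×ˢ Ioo a b,
      timeDeriv u z + spaceDeriv (viscousFlux ε f u) z = 0 := fun z hz => by
    have hconv : timeDeriv u z =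
        ε * spaceDeriv (spaceDeriv u) z - spaceDeriv (fun w => f (u w)) z :=
      hpde z.1 hz.1 z.2 hz.2
    rw [spaceDeriv_viscousFlux hf hu, hconv]
    ring
  refine abs_dissipation_le ht hab hf hu hcons (fun z hz => hR (u z) (hrange z hz)) ?_
  rintro t h x (rfl | rfl)
  · exact (hB₀ ε u _ (hrange _ ⟨h, left_mem_Icc.2 hab⟩) (hleft t h)).trans (le_max_left B₀ B₁)
  · exact (hB₁ ε u _ (hrange _ ⟨h, right_mem_Icc.2 hab⟩) (hright t h)).trans (le_max_right B₀ B₁)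

/-- The uniform H¹-type estimate (eq. v1) in the proof of Theorem 2.8:
`ε ∫₀ᵀ∫₀¹ (∂ₓu)² dx dt ≤ C` uniformly in `ε`, for solutions of the viscous
conservation law with Robin boundary conditions. -/
theorem stmt6 (T p α β γ δ : ℝ) (hT : 0 < T) (hp : 0 < p)
    (hα : 0 ≤ α) (hβ : 0 ≤ β) (hγ : 0 ≤ γ) (hδ : 0 ≤ δ) :
    ∃ C : ℝ, ∀ ε > (0:ℝ), ∀ u : ℝ × ℝ → ℝ,
      ContDiff ℝ (⊤ : ℕ∞) u →
      (∀ z ∈ Set.Icc (0:ℝ) T ×ˢ Set.Icc (0:ℝ) 1, u z ∈ Set.Icc (0:ℝ) 1) →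
      (∀ t ∈ Set.Ioo (0:ℝ) T, ∀ x ∈ Set.Ioo (0:ℝ) 1,
        deriv (fun s => u (s, x)) t
          = ε * deriv (deriv (fun y => u (t, y))) x
            - p * deriv (fun y => J (u (t, y))) x) →
      (∀ t ∈ Set.Icc (0:ℝ) T,
        ε * deriv (fun y => u (t, y)) 0 - p * J (u (t, 0))
          + α - (α + γ) * u (t, 0) = 0) →
      (∀ t ∈ Set.Icc (0:ℝ) T,
        ε * deriv (fun y => u (t, y)) 1 - p * J (u (t, 1))
          - δ + (β + δ) * u (t, 1) = 0) →
      ε * ∫ z in Set.Icc (0:ℝ) T ×ˢ Set.Icc (0:ℝ) 1,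
            (deriv (fun y => u (z.1, y)) z.2)^2 ≤ C := by
  obtain ⟨C, hC⟩ := stmt6_general (f := fun w => p * J w) (g₀ := fun w => α - (α + γ) * w)
    (g₁ := fun w => (β + δ) * w - δ) hT.le zero_le_one (by unfold J; fun_prop) isCompact_Icc
    (by fun_prop) (by fun_prop)
  exact ⟨C, fun ε _ u hu hrange hpde hleft hright => (le_abs_self _).trans <|
    hC ε u (contDiff_infty.1 hu 2) hrange (by simpa only [deriv_const_mul_field] using hpde)
      (fun t ht => by linear_combination -hleft t ht)
      (fun t ht => by linear_combination -hright t ht)⟩
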